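/- arXiv:1002.4935 — 3 statements merged into one kernel-verified Lean document; each statement's English description precedes it below -/
import Mathlib

section
/- Let 𝔻 be a subset of a vector space 𝕍 over an infinite field, let x_1,…,x_r ∈ 𝔻 and α_1,…,α_r be nonzero scalars, and set x = α_1 x_1 + ⋯ + α_r x_r. If this is the unique r-term 𝔻-representation of x (i.e., for any y_1,…,y_r ∈ 𝔻 and nonzero scalars β_1,…,β_r with x = β_1 y_1 + ⋯ + β_r y_r, the list of pairs (β_p, y_p) agrees with (α_p, x_p) up to permutation), then x_1,…,x_r are linearly independent. -/
open scoped BigOperators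

/-- Lemma 5.1(i): if `x = α₁ x₁ + ⋯ + α_r x_r` is the unique `r`-term
`𝔻`-representation of `x` (up to permutation of the terms), then `x₁, …, x_r` are
linearly independent. -/
theorem linearIndependent_of_unique_representation
    {F V : Type*} [Field F] [Infinite F] [AddCommGroup V] [Module F V]
    (D : Set V) {r : ℕ} (x : Fin r → V) (α : Fin r → F)
    (hxD : ∀ i, x i ∈ D) (hα : ∀ i, α i ≠ 0)
    (huniq : ∀ (y : Fin r → V) (β : Fin r → F), (∀ i, y i ∈ D) → (∀ i, β i ≠ 0) →
      ∑ i, β i • y i = ∑ i, α i • x i →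
      ∃ σ : Equiv.Perm (Fin r), ∀ i, β (σ i) = α i ∧ y (σ i) = x i) :
    LinearIndependent F x := by
  classical
  rw [Fintype.linearIndependent_iff]
  intro g hg j
  by_contra hj
  -- Perturb the coefficients along the relation `g`, avoiding finitely many bad parameters.
  obtain ⟨t, ht⟩ := Infinite.exists_notMem_finset
    (Finset.univ.image (fun i => -α i / g i) ∪ Finset.univ.image (fun i => (α i - α j) / g j))
  simp only [Finset.mem_union, Finset.mem_image, Finset.mem_univ, true_and, not_or,
    not_exists] at ht
  obtain ⟨ht_zero, ht_coeff⟩ := ht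
  obtain ⟨σ, hσ⟩ := huniq x (fun i => α i + t * g i) hxD
    (fun i hi => by
      have hgi : g i ≠ 0 := fun h => hα i (by simpa [h] using hi)
      exact ht_zero i (by rw [div_eq_iff hgi]; linear_combination -hi))
    (by simp only [add_smul, mul_smul, Finset.sum_add_distrib, ← Finset.smul_sum, hg,
      smul_zero, add_zero])
  have hβ := (hσ (σ.symm j)).1
  rw [Equiv.apply_symm_apply] at hβ
  exact ht_coeff (σ.symm j) (by rw [div_eq_iff hj]; linear_combination -hβ)
end

section
/- Let 𝔻 be a subset of a vector space 𝕍 over an infinite field, let x_1,…,x_r ∈ 𝔻 and α_1,…,α_r be nonzero scalars, and set x = α_1 x_1 + ⋯ + α_r x_r. If this is the unique r-term 𝔻-representation of x (up to permutation of terms), then it is also a sparsest 𝔻-representation: x admits no 𝔻-representation with fewer than r terms. -/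
open scoped BigOperators

/-- Splitting the first term of a nonempty representation lengthens it by one, and the new leading
coefficient can be chosen outside any given finite set. -/
theorem exists_representation_succ_coeff_notMem
    {F V : Type*} [Field F] [Infinite F] [AddCommGroup V] [Module F V]
    {D : Set V} (S : Finset F) {s : ℕ} (y : Fin (s + 1) → V) (β : Fin (s + 1) → F)
    (hy : ∀ i, y i ∈ D) (hβ : ∀ i, β i ≠ 0) :
    ∃ (z : Fin (s + 2) → V) (γ : Fin (s + 2) → F), (∀ i, z i ∈ D) ∧ (∀ i, γ i ≠ 0) ∧
      γ 0 ∉ S ∧ ∑ i, γ i • z i = ∑ i, β i • y i := by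
  classical
  obtain ⟨t, ht⟩ := Infinite.exists_notMem_finset (insert 0 (insert (β 0) S))
  simp only [Finset.mem_insert, not_or] at ht
  obtain ⟨ht0, htβ, htS⟩ := ht
  refine ⟨Fin.cons (y 0) y, Fin.cons t (Fin.cons (β 0 - t) (Fin.tail β)), ?_, ?_, by simpa, ?_⟩
  · exact Fin.cases (hy 0) hy
  · exact Fin.cases ht0 (Fin.cases (sub_ne_zero.mpr (Ne.symm htβ)) fun i => hβ i.succ)
  · simp only [Fin.sum_univ_succ, Fin.cons_zero, Fin.cons_succ, Fin.tail]
    rw [← add_assoc, ← add_smul, add_sub_cancel]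

/-- A nonempty representation can be lengthened to any larger number of terms, with leading
coefficient outside a given finite set. -/
theorem exists_representation_add_coeff_notMem
    {F V : Type*} [Field F] [Infinite F] [AddCommGroup V] [Module F V]
    {D : Set V} (S : Finset F) {s : ℕ} (y : Fin (s + 1) → V) (β : Fin (s + 1) → F)
    (hy : ∀ i, y i ∈ D) (hβ : ∀ i, β i ≠ 0) (k : ℕ) :
    ∃ (z : Fin (s + k + 2) → V) (γ : Fin (s + k + 2) → F), (∀ i, z i ∈ D) ∧ (∀ i, γ i ≠ 0) ∧
      γ 0 ∉ S ∧ ∑ i, γ i • z i = ∑ i, β i • y i := by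
  induction k with
  | zero => exact exists_representation_succ_coeff_notMem S y β hy hβ
  | succ k ih =>
    obtain ⟨z, γ, hz, hγ, -, hsum⟩ := ih
    obtain ⟨w, δ, hw, hδ, hδS, hsum'⟩ := exists_representation_succ_coeff_notMem S z γ hz hγ
    exact ⟨w, δ, hw, hδ, hδS, hsum'.trans hsum⟩

/-- Lemma 5.1(iii): if `x = α₁ x₁ + ⋯ + α_r x_r` is the unique `r`-term
`𝔻`-representation of `x` (up to permutation of the terms), then it is also a sparsest
`𝔻`-representation: `x` admits no `𝔻`-representation with fewer than `r` terms. -/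
theorem sparsest_of_unique_representation
    {F V : Type*} [Field F] [Infinite F] [AddCommGroup V] [Module F V]
    (D : Set V) {r : ℕ} (x : Fin r → V) (α : Fin r → F)
    (hxD : ∀ i, x i ∈ D) (hα : ∀ i, α i ≠ 0)
    (huniq : ∀ (y : Fin r → V) (β : Fin r → F), (∀ i, y i ∈ D) → (∀ i, β i ≠ 0) →
      ∑ i, β i • y i = ∑ i, α i • x i →
      ∃ σ : Equiv.Perm (Fin r), ∀ i, β (σ i) = α i ∧ y (σ i) = x i) :
    ∀ s : ℕ, s < r → ∀ (y : Fin s → V) (β : Fin s → F),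
      (∀ i, y i ∈ D) → (∀ i, β i ≠ 0) → ∑ i, β i • y i ≠ ∑ i, α i • x i := by
  classical
  intro s hs y β hy hβ hsum
  have coeff_mem : ∀ (z : Fin r → V) (γ : Fin r → F), (∀ i, z i ∈ D) → (∀ i, γ i ≠ 0) →
      ∑ i, γ i • z i = ∑ i, α i • x i → ∀ i, γ i ∈ Finset.univ.image α := by
    intro z γ hz hγ h i
    obtain ⟨σ, hσ⟩ := huniq z γ hz hγ h
    refine Finset.mem_image.mpr ⟨σ.symm i, Finset.mem_univ _, ?_⟩
    simpa using (hσ (σ.symm i)).1.symm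
  cases s with
  | zero =>
    -- Here the sum vanishes, so rescaling all coefficients gives another representation.
    obtain ⟨t, ht⟩ := Infinite.exists_notMem_finset (insert 0 (Finset.univ.image α))
    simp only [Finset.mem_insert, not_or] at ht
    have hzero : ∑ i, α i • x i = 0 := by simpa using hsum.symm
    have hc : t / α ⟨0, hs⟩ ≠ 0 := div_ne_zero ht.1 (hα _)
    have hmem := coeff_mem x (fun i => t / α ⟨0, hs⟩ * α i) hxD
      (fun i => mul_ne_zero hc (hα i))
      (by simp only [mul_smul, ← Finset.smul_sum, hzero, smul_zero]) ⟨0, hs⟩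
    rw [div_mul_cancel₀ _ (hα _)] at hmem
    exact ht.2 hmem
  | succ s =>
    obtain ⟨k, rfl⟩ : ∃ k, r = s + k + 2 := ⟨r - s - 2, by omega⟩
    obtain ⟨z, γ, hz, hγ, hγα, hzsum⟩ :=
      exists_representation_add_coeff_notMem (Finset.univ.image α) y β hy hβ k
    exact hγα (coeff_mem z γ hz hγ (hzsum.trans hsum) 0)
end

section
/- Let X ∈ ℂ^{m×n} be a matrix with columns x_1,…,x_n, and let β ∈ ℂ^n satisfy Xβ = x. If 2‖β‖₀ < spark({x_1,…,x_n}), then β is the unique solution of min{‖γ‖₀ : Xγ = x}: every γ ∈ ℂ^n with Xγ = x and γ ≠ β satisfies ‖γ‖₀ > ‖β‖₀. -/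
open scoped BigOperators

noncomputable section

/-- `‖β‖₀`: the number of nonzero entries of `β`. -/
noncomputable def l0 {n : ℕ} (β : Fin n → ℂ) : ℕ := (Function.support β).ncard

/-- The spark of a finite collection of vectors: the smallest cardinality of a linearly
dependent subcollection (`⊤` if the whole collection is linearly independent). -/
noncomputable def spark {ι : Type*} {E : Type*} [AddCommGroup E] [Module ℂ E]
    (v : ι → E) : ℕ∞ :=
  sInf {k : ℕ∞ | ∃ s : Finset ι, (s.card : ℕ∞) = k ∧ ¬ LinearIndependent ℂ (fun i : s => v i.1)}

/-- A nonzero vector in the kernel of `X` has at least `spark` many nonzero entries, the spark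
being that of the columns of `X`. -/
theorem spark_le_l0_of_mulVec_eq_zero {m n : ℕ} (X : Matrix (Fin m) (Fin n) ℂ)
    (δ : Fin n → ℂ) (hδ : X.mulVec δ = 0) (hne : δ ≠ 0) :
    spark (fun j i => X i j) ≤ (l0 δ : ℕ∞) := by
  classical
  obtain ⟨j, hj⟩ := Function.ne_iff.mp hne
  refine sInf_le ⟨Finset.univ.filter (fun i => δ i ≠ 0), ?_, fun hli => hj ?_⟩
  · rw [l0, ← Set.ncard_coe_finset]
    congr 2
    ext i
    simp
  · have hon : LinearIndepOn ℂ (fun j i => X i j)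
        (Finset.univ.filter (fun i => δ i ≠ 0) : Finset (Fin n)) := hli
    refine linearIndepOn_finset_iff.mp hon δ ?_ j (by simpa using hj)
    rw [Finset.sum_filter_of_ne fun i _ h => left_ne_zero_of_smul h]
    ext i
    simpa [Matrix.mulVec, dotProduct, mul_comm] using congrFun hδ i

theorem l0_sub_le {n : ℕ} (γ β : Fin n → ℂ) : l0 (γ - β) ≤ l0 γ + l0 β :=
  (Set.ncard_le_ncard (Function.support_sub γ β) (Set.toFinite _)).trans (Set.ncard_union_le _ _)

/-- uniqueness of the sparsest solution via spark: if `Xβ = x` and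
`2‖β‖₀ < spark(X)` (spark of the columns of `X`), then `β` is the unique solution of
`min {‖γ‖₀ : Xγ = x}`: every other solution `γ ≠ β` satisfies `‖γ‖₀ > ‖β‖₀`. -/
theorem sparsest_solution_unique_of_spark {m n : ℕ} (X : Matrix (Fin m) (Fin n) ℂ)
    (x : Fin m → ℂ) (β : Fin n → ℂ) (hβ : X.mulVec β = x)
    (hspark : (2 * l0 β : ℕ∞) < spark (fun j i => X i j)) :
    ∀ γ : Fin n → ℂ, X.mulVec γ = x → γ ≠ β → l0 β < l0 γ := by
  intro γ hγ hne
  by_contra! hle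
  have hker : X.mulVec (γ - β) = 0 := by rw [Matrix.mulVec_sub, hγ, hβ, sub_self]
  have hlt := hspark.trans_le (spark_le_l0_of_mulVec_eq_zero X _ hker (sub_ne_zero.mpr hne))
  have hsub := l0_sub_le γ β
  norm_cast at hlt
  omega
end
end
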